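/- arXiv:0806.3874 — 6 statements merged into one kernel-verified Lean document; each statement's English description precedes it below -/
import Mathlib

section
/- Let L be a linear functional on the space ℝ[x]_{2t} of polynomials of total degree at most 2t in n variables such that the moment matrix M_t(L) is positive semidefinite. Then for every integer s with 1 ≤ s ≤ t one has Ker M_t(L) ∩ ℝ[x]_s = Ker M_s(L); that is, a polynomial p of degree at most s satisfies L(p·x^β) = 0 for all monomials x^β of degree at most t if and only if L(p·x^β) = 0 for all monomials x^β of degree at most s. -/
open MvPolynomial

noncomputable section

/-- The polynomial ring `ℝ[x₁,…,xₙ]`. -/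
abbrev MP (n : ℕ) := MvPolynomial (Fin n) ℝ

/-- The total degree `|α|` of a monomial exponent `α`. -/
def mdeg {n : ℕ} (α : Fin n →₀ ℕ) : ℕ := α.sum fun _ e => e

/-- The subspace `ℝ[x]_t` of polynomials of total degree at most `t`. -/
abbrev RxT (n t : ℕ) : Submodule ℝ (MP n) := restrictTotalDegree (Fin n) ℝ t

/-- The kernel of the moment matrix `M_s(L)`: polynomials `p` of degree at most `s` such that
`L(p·x^β) = 0` for all monomials `x^β` of degree at most `s`. -/
def momKer {n : ℕ} (L : Module.Dual ℝ (MP n)) (s : ℕ) : Set (MP n) :=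
  {p | p.totalDegree ≤ s ∧ ∀ β : Fin n →₀ ℕ, mdeg β ≤ s → L (p * monomial β 1) = 0}

/-- Positive semidefiniteness of the moment matrix `M_t(L)`: `L(p²) ≥ 0` for all `p ∈ ℝ[x]_t`. -/
def momPSD {n : ℕ} (L : Module.Dual ℝ (MP n)) (t : ℕ) : Prop :=
  ∀ p : MP n, p.totalDegree ≤ t → 0 ≤ L (p * p)

/-- The bilinear/moment form of order `s` associated to `L`, as a map `ℝ[x]_s → (ℝ[x]_s)*`;
its matrix in the monomial basis is the moment matrix `M_s(L)`. -/
def momBil {n : ℕ} (L : Module.Dual ℝ (MP n)) (s : ℕ) :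
    RxT n s →ₗ[ℝ] Module.Dual ℝ (RxT n s) :=
  LinearMap.mk₂ ℝ (fun p q => L ((p : MP n) * (q : MP n)))
    (fun p p' q => by simp [add_mul])
    (fun c p q => by simp [smul_mul_assoc])
    (fun p q q' => by simp [mul_add])
    (fun c p q => by simp [mul_smul_comm])

/-- The rank of the moment matrix `M_s(L)`. -/
def momRank {n : ℕ} (L : Module.Dual ℝ (MP n)) (s : ℕ) : ℕ :=
  Module.finrank ℝ (LinearMap.range (momBil L s))

/-- The column of the moment matrix `M_s(L)` indexed by the monomial `β`. -/
def momCol {n : ℕ} (L : Module.Dual ℝ (MP n)) (s : ℕ) (β : Fin n →₀ ℕ) :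
    {α : Fin n →₀ ℕ // mdeg α ≤ s} → ℝ :=
  fun α => L (monomial (α.1 + β) 1)

/-- `G^⊥`: linear functionals vanishing on the set `G`. -/
def annih {n : ℕ} (G : Set (MP n)) : Submodule ℝ (Module.Dual ℝ (MP n)) :=
  (Submodule.span ℝ G).dualAnnihilator

/-- The projection `π_s` sending a linear functional to its restriction to `ℝ[x]_s`. -/
def projDual (n s : ℕ) : Module.Dual ℝ (MP n) →ₗ[ℝ] Module.Dual ℝ (RxT n s) :=
  (RxT n s).subtype.dualMap

/-- `dim π_s(G^⊥)`. -/
def dimProj {n : ℕ} (s : ℕ) (G : Set (MP n)) : ℕ :=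
  Module.finrank ℝ (Submodule.map (projDual n s) (annih G))

/-- The one-degree prolongation `S⁺ = S ∪ x₁S ∪ … ∪ xₙS` of a set of polynomials. -/
def plusOp {n : ℕ} (G : Set (MP n)) : Set (MP n) :=
  G ∪ ⋃ i : Fin n, (fun p => X i * p) '' G

/-- The set `H_t = {x^α h_j : |α| + deg h_j ≤ t}` of prolongations of the generators. -/
def Hset {n m : ℕ} (h : Fin m → MP n) (t : ℕ) : Set (MP n) :=
  {p | ∃ (α : Fin n →₀ ℕ) (j : Fin m), mdeg α + (h j).totalDegree ≤ t ∧ p = monomial α 1 * h j}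

/-- The cone `K_{t,⪰}` of linear functionals vanishing on `H_t` with `M_{⌊t/2⌋}(L) ⪰ 0`. -/
def Kpos {n m : ℕ} (h : Fin m → MP n) (t : ℕ) : Set (Module.Dual ℝ (MP n)) :=
  {L | (∀ g ∈ Hset h t, L g = 0) ∧ momPSD L (t / 2)}

/-- `L*` is generic in `K_{t,⪰}`: it belongs to `K_{t,⪰}` and its moment matrix
`M_{⌊t/2⌋}(L*)` has maximum rank over `K_{t,⪰}`. -/
def Generic {n m : ℕ} (h : Fin m → MP n) (t : ℕ) (Ls : Module.Dual ℝ (MP n)) : Prop :=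
  Ls ∈ Kpos h t ∧ ∀ L ∈ Kpos h t, momRank L (t / 2) ≤ momRank Ls (t / 2)

/-- `W_t = {x^α g : |α| ≤ ⌊t/2⌋, g ∈ N_t}`, with `N_t = Ker M_{⌊t/2⌋}(L*)` for `L*` generic. -/
def Wset {n m : ℕ} (h : Fin m → MP n) (t : ℕ) (Ls : Module.Dual ℝ (MP n)) : Set (MP n) :=
  {p | ∃ (α : Fin n →₀ ℕ) (g : MP n), mdeg α ≤ t / 2 ∧ g ∈ momKer Ls (t / 2) ∧
    p = monomial α 1 * g}

/-- The real radical `√[ℝ]I` of an ideal `I`. -/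
def realRad {n : ℕ} (I : Ideal (MP n)) : Set (MP n) :=
  {p | ∃ m : ℕ, 0 < m ∧ ∃ (k : ℕ) (q : Fin k → MP n), p ^ (2 * m) + ∑ j, q j ^ 2 ∈ I}

/-- A set of monomials closed under taking divisions. -/
def DivClosed {n : ℕ} (B : Set (Fin n →₀ ℕ)) : Prop :=
  ∀ a ∈ B, ∀ a' : Fin n →₀ ℕ, a' ≤ a → a' ∈ B

/-- A set of monomials connected to 1: each `m ∈ B` is a product `m = m₁⋯m_k` with `m₁ = 1`
and all partial products `m₁⋯m_h ∈ B` (written additively on exponents). -/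
def ConnectedToOne {n : ℕ} (B : Set (Fin n →₀ ℕ)) : Prop :=
  ∀ a ∈ B, ∃ (k : ℕ) (c : Fin (k + 1) → (Fin n →₀ ℕ)),
    c 0 = 0 ∧ (∀ j : Fin (k + 1), (∑ i ∈ Finset.univ.filter (· ≤ j), c i) ∈ B) ∧
    (∑ i, c i) = a

/-- `Span_ℝ(B)` for a set `B` of monomials. -/
def spanMon {n : ℕ} (B : Set (Fin n →₀ ℕ)) : Submodule ℝ (MP n) :=
  Submodule.span ℝ ((fun a => (monomial a 1 : MP n)) '' B)

/-- The border `∂B = B⁺ \ B` of a set of monomials. -/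
def borderSet {n : ℕ} (B : Set (Fin n →₀ ℕ)) : Set (Fin n →₀ ℕ) :=
  {a | a ∉ B ∧ ∃ i : Fin n, ∃ b ∈ B, a = b + Finsupp.single i 1}

end

/-!
Evaluating `L (p * p)` only involves the values `L (p * x^β)` for the monomials `x^β` of `p`, so a
polynomial in the kernel of the smaller moment matrix is isotropic for the larger one.
By Cauchy-Schwarz, an isotropic vector of a positive semidefinite form lies in its kernel.
-/

open LinearMap (BilinForm)

section BilinForm

variable {R M : Type*} [CommRing R] [LinearOrder R] [IsStrictOrderedRing R] [AddCommGroup M]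
  [Module R M] {B : BilinForm R M} {V W : Submodule R M}

theorem mem_orthogonal_of_apply_self_eq_zero (hB : (B.restrict V).IsPosSemidef) {x : M}
    (hxV : x ∈ V) (hx : B x x = 0) : x ∈ B.orthogonal V := by
  have hker : (⟨x, hxV⟩ : V) ∈ LinearMap.ker (B.restrict V) :=
    (BilinForm.apply_apply_same_eq_zero_iff _ hB.nonneg (BilinForm.isSymm_iff.mp hB.isSymm)).mp hx
  intro y hy
  calc
    B y x = B x y := hB.isSymm.eq ⟨y, hy⟩ ⟨x, hxV⟩
    _ = 0 := LinearMap.congr_fun (LinearMap.mem_ker.mp hker) ⟨y, hy⟩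

theorem inf_orthogonal_inf_eq_of_restrict_isPosSemidef (hB : (B.restrict V).IsPosSemidef)
    (hWV : W ≤ V) : V ⊓ B.orthogonal V ⊓ W = W ⊓ B.orthogonal W := by
  apply le_antisymm
  · rintro x ⟨⟨_, hx⟩, hxW⟩
    exact ⟨hxW, BilinForm.orthogonal_le hWV hx⟩
  · rintro x ⟨hxW, hx⟩
    have hisotropic : B x x = 0 := hx x hxW
    exact ⟨⟨hWV hxW, mem_orthogonal_of_apply_self_eq_zero hB (hWV hxW) hisotropic⟩, hxW⟩

end BilinForm

section MomentForm

variable {R A : Type*} [CommSemiring R] [CommSemiring A] [Algebra R A]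

/-- The moment form `(p, q) ↦ L (p * q)` of a linear functional `L` on a commutative algebra. On
polynomials, its matrix in the basis of monomials is the (infinite) moment matrix of `L`. -/
def momentForm (L : Module.Dual R A) : BilinForm R A :=
  (LinearMap.mul R A).compr₂ L

@[simp]
theorem momentForm_apply (L : Module.Dual R A) (p q : A) : momentForm L p q = L (p * q) :=
  rfl

theorem restrict_momentForm_isPosSemidef_iff [LE R] {L : Module.Dual R A} {V : Submodule R A} :
    ((momentForm L).restrict V).IsPosSemidef ↔ ∀ p ∈ V, 0 ≤ L (p * p) where
  mp hL p hp := hL.nonneg ⟨p, hp⟩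
  mpr hL :=
    { eq := fun p q ↦ congrArg L (mul_comm (p : A) q)
      nonneg := fun p ↦ hL p p.2 }

end MomentForm

section MomentKer

variable {σ R : Type*}

/-- The kernel of the moment matrix of `L` with rows and columns indexed by a set `S` of monomials,
encoded as the radical of the moment form restricted to the polynomials supported in `S`. -/
noncomputable def momentKer [CommSemiring R] (L : Module.Dual R (MvPolynomial σ R))
    (S : Set (σ →₀ ℕ)) : Submodule R (MvPolynomial σ R) :=
  restrictSupport R S ⊓ (momentForm L).orthogonal (restrictSupport R S)

theorem mem_momentKer_iff [CommSemiring R] {L : Module.Dual R (MvPolynomial σ R)}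
    {S : Set (σ →₀ ℕ)} {p : MvPolynomial σ R} :
    p ∈ momentKer L S ↔
      p ∈ restrictSupport R S ∧ ∀ β ∈ S, L (p * monomial β 1) = 0 := by
  have hspan : p ∈ (momentForm L).orthogonal (restrictSupport R S) ↔
      restrictSupport R S ≤ LinearMap.ker (momentForm L p) := by
    simp only [BilinForm.mem_orthogonal_iff, SetLike.le_def, LinearMap.mem_ker, momentForm_apply,
      mul_comm p]
  rw [momentKer, Submodule.mem_inf, hspan, restrictSupport_eq_span, Submodule.span_le,
    Set.image_subset_iff]
  rfl

theorem momKer_inter_degLE_of_psd_general [CommRing R] [LinearOrder R] [IsStrictOrderedRing R]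
    {L : Module.Dual R (MvPolynomial σ R)} {S T : Set (σ →₀ ℕ)}
    (hL : ((momentForm L).restrict (restrictSupport R T)).IsPosSemidef) (hST : S ⊆ T) :
    momentKer L T ⊓ restrictSupport R S = momentKer L S :=
  inf_orthogonal_inf_eq_of_restrict_isPosSemidef hL (restrictSupport_mono R hST)

end MomentKer

theorem coe_restrictTotalDegree {σ R : Type*} [CommSemiring R] (s : ℕ) :
    (restrictTotalDegree σ R s : Set (MvPolynomial σ R)) = {p | p.totalDegree ≤ s} :=
  Set.ext (mem_restrictTotalDegree σ s)

theorem momPSD_iff_restrict_isPosSemidef {n t : ℕ} {L : Module.Dual ℝ (MP n)} :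
    momPSD L t ↔ ((momentForm L).restrict (RxT n t)).IsPosSemidef := by
  simp only [restrict_momentForm_isPosSemidef_iff, mem_restrictTotalDegree, momPSD]

theorem momKer_eq_momentKer {n : ℕ} (L : Module.Dual ℝ (MP n)) (s : ℕ) :
    momKer L s = momentKer L {α | mdeg α ≤ s} := by
  ext p
  rw [SetLike.mem_coe, mem_momentKer_iff]
  exact and_congr_left' (mem_restrictTotalDegree (Fin n) s p).symm

/-- If `L` is a linear functional on `ℝ[x]_{2t}` with `M_t(L) ⪰ 0`, then for
every `1 ≤ s ≤ t` one has `Ker M_t(L) ∩ ℝ[x]_s = Ker M_s(L)`. -/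
theorem momKer_inter_degLE_of_psd {n t : ℕ} (L : Module.Dual ℝ (MP n))
    (hpsd : momPSD L t) (s : ℕ) (hs1 : 1 ≤ s) (hst : s ≤ t) :
    momKer L t ∩ {p : MP n | p.totalDegree ≤ s} = momKer L s := by
  rw [momKer_eq_momentKer, momKer_eq_momentKer, ← coe_restrictTotalDegree, ← Submodule.coe_inf]
  exact congrArg _ (momKer_inter_degLE_of_psd_general (momPSD_iff_restrict_isPosSemidef.mp hpsd)
    fun _ hα ↦ le_trans hα hst)
end

section
/- Let Y be a real matrix whose columns are indexed by the monomials of total degree at most s in n variables, and for a monomial a let Y_a denote the corresponding column. Assume that for every choice of real scalars (λ_a) indexed by the monomials of degree at most s−1 and every i ∈ {1,…,n}: if Σ_a λ_a Y_a = 0 then Σ_a λ_a Y_{x_i·a} = 0. Then there exists a set B of monomials of degree at most s, closed under taking divisions, such that the columns {Y_b : b ∈ B} are linearly independent and span the column space of Y (i.e. B indexes a maximal linearly independent set of columns of Y). -/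
open MvPolynomial

/-!
Run through the monomials of degree at most `s` in a degree-compatible monomial order and keep those
whose column is not in the span of the earlier columns. As in Gaussian elimination, the columns kept
form a basis of the column space. If the column of `a` depends on earlier columns, this relation
involves only monomials of degree at most that of `a`; shifted by `xᵢ` it expresses the column of
`xᵢ·a` through earlier columns, because multiplication by `xᵢ` preserves the order. So all
multiples of a discarded monomial are discarded: the kept ones are closed under taking divisions.
-/

section Pivots

open Finsupp (linearCombination supported)
open Submodule (span)

variable {K V W ι : Type*}

variable (K) in
/-- The pivots of a family of vectors: the indices whose vector is not in the span of the vectors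
with smaller index. For the columns of a matrix these are the pivot columns of Gaussian elimination,
which form the greedy basis of the column space. -/
def pivots [Semiring K] [AddCommMonoid V] [Module K V] [Preorder ι] (v : ι → V) : Set ι :=
  {a | v a ∉ span K (v '' Set.Iio a)}

theorem linearIndepOn_pivots [DivisionRing K] [AddCommGroup V] [Module K V] [LinearOrder ι]
    (v : ι → V) : LinearIndepOn K v (pivots K v) := by
  refine linearIndepOn_of_finite _ fun t ht hfin => ?_
  lift t to Finset ι using hfin
  induction t using Finset.induction_on_max with
  | empty => simp only [Finset.coe_empty, linearIndepOn_empty]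
  | insert a t hlt ih =>
    rw [Finset.coe_insert, Set.insert_subset_iff] at ht
    have hat : v a ∉ span K (v '' t) := fun h =>
      ht.1 (Submodule.span_mono (Set.image_mono hlt) h)
    rw [Finset.coe_insert]
    exact (ih ht.2).insert hat

theorem span_image_inter_pivots [Semiring K] [AddCommMonoid V] [Module K V] [Preorder ι]
    [WellFoundedLT ι] (v : ι → V) {S : Set ι} (hS : IsLowerSet S) :
    span K (v '' (S ∩ pivots K v)) = span K (v '' S) := by
  refine le_antisymm (Submodule.span_mono (Set.image_mono Set.inter_subset_left)) ?_
  rw [Submodule.span_le, Set.image_subset_iff]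
  intro a ha
  induction a using WellFoundedLT.induction with
  | ind a ih =>
    by_cases h : v a ∈ span K (v '' Set.Iio a)
    · have earlier : v '' Set.Iio a ⊆ span K (v '' (S ∩ pivots K v)) :=
        Set.image_subset_iff.2 fun b hb => ih b hb (hS hb.le ha)
      exact Submodule.span_le.2 earlier h
    · exact Submodule.subset_span (Set.mem_image_of_mem v ⟨ha, h⟩)

variable (K) in
/-- Every linear relation among the vectors `v a`, `a ∈ T`, also holds among the `w a`. With
`w a = v (f a)` this says that the relations of `v` on `T` may be shifted by `f`. -/
def RelationsTransfer [Semiring K] [AddCommMonoid V] [Module K V] [AddCommMonoid W] [Module K W]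
    (T : Set ι) (v : ι → V) (w : ι → W) : Prop :=
  ∀ l ∈ supported K K T, linearCombination K v l = 0 → linearCombination K w l = 0

theorem RelationsTransfer.comp [Semiring K] [AddCommMonoid V] [Module K V]
    [AddCommMonoid W] [Module K W] {κ : Type*} {v : ι → V} {w : ι → W} {T : Set ι}
    (h : RelationsTransfer K T v w) (e : κ → ι) :
    RelationsTransfer K (e ⁻¹' T) (v ∘ e) (w ∘ e) := by
  intro l hl hrel
  rw [← Finsupp.linearCombination_mapDomain] at hrel ⊢
  exact h _ (Finsupp.supported_comap_lmapDomain K K e T hl) hrel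

theorem RelationsTransfer.mem_span_image [Ring K] [AddCommGroup V] [Module K V]
    [AddCommGroup W] [Module K W] {v : ι → V} {w : ι → W} {T U : Set ι}
    (h : RelationsTransfer K T v w) {a : ι} (ha : a ∈ T) (hU : U ⊆ T)
    (hva : v a ∈ span K (v '' U)) : w a ∈ span K (w '' U) := by
  rw [Finsupp.mem_span_image_iff_linearCombination] at hva ⊢
  obtain ⟨l, hl, hla⟩ := hva
  have hsupp : l - Finsupp.single a 1 ∈ supported K K T :=
    Submodule.sub_mem _ (Finsupp.supported_mono hU hl) (Finsupp.single_mem_supported K 1 ha)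
  have hv : linearCombination K v (l - Finsupp.single a 1) = 0 := by
    rw [map_sub, Finsupp.linearCombination_single, one_smul, hla, sub_self]
  have hw := h _ hsupp hv
  rw [map_sub, Finsupp.linearCombination_single, one_smul, sub_eq_zero] at hw
  exact ⟨l, hl, hw⟩

theorem RelationsTransfer.mem_pivots [Ring K] [AddCommGroup V] [Module K V] [Preorder ι]
    {v : ι → V} {f : ι → ι} {S : Set ι} (h : RelationsTransfer K (f ⁻¹' S) v (v ∘ f))
    (hf : StrictMono f) (hS : IsLowerSet S) {a : ι} (haS : f a ∈ S) (ha : f a ∈ pivots K v) :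
    a ∈ pivots K v := by
  intro hva
  have hU : Set.Iio a ⊆ f ⁻¹' S := fun b hb => hS (hf hb).le haS
  have hfa : v (f a) ∈ span K (v ∘ f '' Set.Iio a) := h.mem_span_image haS hU hva
  rw [Set.image_comp] at hfa
  exact ha (Submodule.span_mono (Set.image_mono hf.mapsTo_Iio.image_subset) hfa)

end Pivots

section Monomials

open Finsupp (linearCombination single supported)
open Submodule (span)
open scoped MonomialOrder

variable {σ K V : Type*}

theorem isLowerSet_of_add_single_mem {B : Set (σ →₀ ℕ)}
    (h : ∀ (i : σ) (a : σ →₀ ℕ), a + single i 1 ∈ B → a ∈ B) : IsLowerSet B := by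
  have mem_of_add_mem : ∀ d a : σ →₀ ℕ, a + d ∈ B → a ∈ B := by
    intro d
    induction d using Finsupp.induction_linear with
    | zero => exact fun a ha => by rwa [add_zero] at ha
    | add d e hd he => exact fun a ha => hd a (he _ (by rwa [add_assoc]))
    | single i k =>
      induction k with
      | zero => exact fun a ha => by rwa [Finsupp.single_zero, add_zero] at ha
      | succ k ih =>
        exact fun a ha => ih a (h i _ (by rwa [add_assoc, ← Finsupp.single_add]))
  intro a b hba ha
  obtain ⟨d, rfl⟩ := exists_add_of_le hba
  exact mem_of_add_mem d b ha

theorem mem_pivots_toSyn_of_add_single [Ring K] [AddCommGroup V] [Module K V]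
    (m : MonomialOrder σ) {S : Set (σ →₀ ℕ)} (hS : IsLowerSet (m.toSyn.symm ⁻¹' S))
    {Y : (σ →₀ ℕ) → V} {i : σ}
    (hY : RelationsTransfer K {a | a + single i 1 ∈ S} Y fun a => Y (a + single i 1))
    {a : σ →₀ ℕ} (haS : a + single i 1 ∈ S)
    (ha : m.toSyn (a + single i 1) ∈ pivots K (Y ∘ m.toSyn.symm)) :
    m.toSyn a ∈ pivots K (Y ∘ m.toSyn.symm) := by
  let shift : m.syn → m.syn := fun b => b + m.toSyn (single i 1)
  have symm_shift (b : m.syn) : m.toSyn.symm (shift b) = m.toSyn.symm b + single i 1 := by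
    rw [map_add, AddEquiv.symm_apply_apply]
  have hshift : RelationsTransfer K (shift ⁻¹' (m.toSyn.symm ⁻¹' S)) (Y ∘ m.toSyn.symm)
      ((Y ∘ m.toSyn.symm) ∘ shift) := by
    simpa only [Set.preimage, Set.mem_ofPred_eq, Function.comp_def, symm_shift]
      using hY.comp m.toSyn.symm
  rw [map_add] at ha
  refine hshift.mem_pivots add_left_strictMono hS ?_ ha
  simpa only [Set.mem_preimage, symm_shift, AddEquiv.symm_apply_apply] using haS

variable [DivisionRing K] [AddCommGroup V] [Module K V]

theorem exists_isLowerSet_linearIndepOn_span_eq (m : MonomialOrder σ) {S : Set (σ →₀ ℕ)}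
    (hS : ∀ a ∈ S, ∀ b, b ≼[m] a → b ∈ S) (Y : (σ →₀ ℕ) → V)
    (hY : ∀ i : σ,
      RelationsTransfer K {a | a + single i 1 ∈ S} Y fun a => Y (a + single i 1)) :
    ∃ B ⊆ S, IsLowerSet B ∧ LinearIndepOn K Y B ∧ span K (Y '' B) = span K (Y '' S) := by
  let e : m.syn ≃ (σ →₀ ℕ) := m.toSyn.symm.toEquiv
  have hlower : IsLowerSet (e ⁻¹' S) := fun a b hba ha =>
    hS _ ha _ (by simpa [e] using hba)
  refine ⟨e '' (e ⁻¹' S ∩ pivots K (Y ∘ e)), Set.image_subset_iff.2 Set.inter_subset_left,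
    isLowerSet_of_add_single_mem fun i a ha => ?_, ?_, ?_⟩
  · rw [Set.mem_image_equiv] at ha ⊢
    have haS : a + single i 1 ∈ S := by simpa [e] using ha.1
    refine ⟨?_, mem_pivots_toSyn_of_add_single m hlower (hY i) haS ha.2⟩
    simpa [e] using hS _ haS a (m.toSyn_monotone le_self_add)
  · exact (linearIndepOn_equiv e).1 ((linearIndepOn_pivots _).mono Set.inter_subset_right)
  · rw [← Set.image_comp, span_image_inter_pivots _ hlower, Set.image_comp,
      Set.image_preimage_eq _ e.surjective]

theorem exists_divClosed_column_basis_general (s : ℕ) (Y : (σ →₀ ℕ) → V)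
    (hY : ∀ i : σ, ∀ l ∈ supported K K {a : σ →₀ ℕ | a.degree < s},
      linearCombination K Y l = 0 → linearCombination K (fun a => Y (a + single i 1)) l = 0) :
    ∃ B ⊆ {a : σ →₀ ℕ | a.degree ≤ s}, IsLowerSet B ∧ LinearIndepOn K Y B ∧
      span K (Y '' B) = span K (Y '' {a | a.degree ≤ s}) := by
  obtain ⟨_, _⟩ := exists_wellFoundedGT σ
  refine exists_isLowerSet_linearIndepOn_span_eq MonomialOrder.degLex
    (S := {a | a.degree ≤ s}) (fun a ha b hba => (Finsupp.DegLex.monotone_degree hba).trans ha) Y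
    fun i => ?_
  simpa only [RelationsTransfer, Set.mem_ofPred_eq, map_add, Finsupp.degree_single,
    Nat.add_one_le_iff] using hY i

end Monomials

/-- Let `Y` be a real matrix whose columns are indexed by the monomials of
degree at most `s` in `n` variables.  If, whenever a linear combination of the columns indexed by
monomials of degree at most `s-1` vanishes, the corresponding combination of the columns shifted
by any variable `xᵢ` also vanishes, then there is a set `B` of monomials of degree at most `s`,
closed under taking divisions, indexing a maximal linearly independent set of columns of `Y`. -/
theorem exists_divClosed_column_basis {n s : ℕ} {R : Type*} (Y : (Fin n →₀ ℕ) → (R → ℝ))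
    (hY : ∀ lam : (Fin n →₀ ℕ) →₀ ℝ, (∀ a ∈ lam.support, mdeg a ≤ s - 1) → ∀ i : Fin n,
      (lam.sum fun a c => c • Y a) = 0 →
      (lam.sum fun a c => c • Y (a + Finsupp.single i 1)) = 0) :
    ∃ B : Set (Fin n →₀ ℕ), (∀ a ∈ B, mdeg a ≤ s) ∧ DivClosed B ∧
      LinearIndependent ℝ (fun b : B => Y ↑b) ∧
      Submodule.span ℝ (Y '' B) = Submodule.span ℝ (Y '' {a | mdeg a ≤ s}) := by
  obtain ⟨B, hdeg, hlower, hindep, hspan⟩ :=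
    exists_divClosed_column_basis_general s Y fun i l hl =>
      hY l (fun a ha => Nat.le_sub_one_of_lt (hl ha)) i
  exact ⟨B, hdeg, fun a ha b hba => hlower hba ha, hindep, hspan⟩
end

section
/- If L₁ and L₂ are two generic elements of K_{t,⪰}, then Ker M_{⌊t/2⌋}(L₁) = Ker M_{⌊t/2⌋}(L₂); i.e. all generic elements of K_{t,⪰} have the same moment-matrix kernel. -/
open MvPolynomial

/-! The kernel of a sum of two positive semidefinite forms is the intersection of their kernels:
`L(p²) + L'(p²) = 0` forces both terms to vanish, and by Cauchy–Schwarz a positive semidefinite form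
has every `p` with `L(p²) = 0` in its kernel. As `K_{t,⪰}` is closed under addition, the kernel of
an element of maximal rank cannot shrink when another element of the cone is added, so it lies in
the kernel of that other element. Hence each of two generic kernels contains the other. -/

section LinearAlgebra

open LinearMap Module

section PosSemidef

variable {R M : Type*} [CommRing R] [LinearOrder R] [IsStrictOrderedRing R] [AddCommGroup M]
  [Module R M] {B C : LinearMap.BilinForm R M}

theorem mem_ker_iff_apply_self_eq_zero_of_isPosSemidef (hB : B.IsPosSemidef) {x : M} :
    x ∈ ker B ↔ B x x = 0 :=
  (B.apply_apply_same_eq_zero_iff hB.nonneg (BilinForm.isSymm_iff.mp hB.isSymm)).symm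

theorem ker_add_eq_inf_of_isPosSemidef (hB : B.IsPosSemidef) (hC : C.IsPosSemidef) :
    ker (B + C) = ker B ⊓ ker C := by
  ext x
  rw [Submodule.mem_inf, mem_ker_iff_apply_self_eq_zero_of_isPosSemidef (hB.add hC),
    mem_ker_iff_apply_self_eq_zero_of_isPosSemidef hB,
    mem_ker_iff_apply_self_eq_zero_of_isPosSemidef hC]
  exact add_eq_zero_iff_of_nonneg (hB.nonneg x) (hC.nonneg x)

end PosSemidef

theorem ker_eq_of_le_of_finrank_range_le {K V W W' : Type*} [DivisionRing K] [AddCommGroup V]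
    [Module K V] [FiniteDimensional K V] [AddCommGroup W] [Module K W] [AddCommGroup W']
    [Module K W'] {f : V →ₗ[K] W} {g : V →ₗ[K] W'} (hker : ker f ≤ ker g)
    (hrank : finrank K (range f) ≤ finrank K (range g)) : ker f = ker g := by
  refine Submodule.eq_of_le_of_finrank_le hker ?_
  have hf := f.finrank_range_add_finrank_ker
  have hg := g.finrank_range_add_finrank_ker
  lia

theorem ker_le_ker_of_finrank_range_add_le {K V : Type*} [Field K] [LinearOrder K]
    [IsStrictOrderedRing K] [AddCommGroup V] [Module K V] [FiniteDimensional K V]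
    {B C : LinearMap.BilinForm K V} (hB : B.IsPosSemidef) (hC : C.IsPosSemidef)
    (hrank : finrank K (range (B + C)) ≤ finrank K (range B)) : ker B ≤ ker C := by
  have hinf : ker (B + C) = ker B ⊓ ker C := ker_add_eq_inf_of_isPosSemidef hB hC
  have heq : ker (B + C) = ker B :=
    ker_eq_of_le_of_finrank_range_le (hinf.trans_le inf_le_left) hrank
  exact inf_eq_left.mp (hinf.symm.trans heq)

theorem restrictSupport_le_ker_iff {σ R M : Type*} [CommSemiring R] [AddCommMonoid M] [Module R M]
    {S : Set (σ →₀ ℕ)} {f : MvPolynomial σ R →ₗ[R] M} :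
    restrictSupport R S ≤ ker f ↔ ∀ β ∈ S, f (monomial β 1) = 0 := by
  rw [restrictSupport_eq_span, Submodule.span_le]
  exact Set.forall_mem_image

end LinearAlgebra

section MomentForm

variable {n s : ℕ} {L L' : Module.Dual ℝ (MP n)}

theorem momBil_apply (L : Module.Dual ℝ (MP n)) (p q : RxT n s) :
    momBil L s p q = L ((p : MP n) * q) :=
  rfl

theorem momBil_add (L L' : Module.Dual ℝ (MP n)) (s : ℕ) :
    momBil (L + L') s = momBil L s + momBil L' s :=
  rfl

theorem momPSD.add (hL : momPSD L s) (hL' : momPSD L' s) : momPSD (L + L') s :=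
  fun p hp ↦ add_nonneg (hL p hp) (hL' p hp)

theorem momPSD.isPosSemidef_momBil (hL : momPSD L s) :
    LinearMap.BilinForm.IsPosSemidef (momBil L s) where
  eq p q := by simp only [momBil_apply, mul_comm]
  nonneg p := hL p ((mem_restrictTotalDegree _ _ _).mp p.2)

theorem mem_ker_momBil_iff {p : RxT n s} :
    p ∈ LinearMap.ker (momBil L s) ↔
      ∀ β : Fin n →₀ ℕ, mdeg β ≤ s → L ((p : MP n) * monomial β 1) = 0 := by
  calc p ∈ LinearMap.ker (momBil L s)
    _ ↔ RxT n s ≤ LinearMap.ker (L ∘ₗ LinearMap.mulLeft ℝ (p : MP n)) := by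
      simp only [LinearMap.mem_ker, LinearMap.ext_iff, Subtype.forall, SetLike.le_def]
      rfl
    _ ↔ _ := restrictSupport_le_ker_iff

theorem momKer_eq_map_ker_momBil (L : Module.Dual ℝ (MP n)) (s : ℕ) :
    momKer L s = (LinearMap.ker (momBil L s)).map (RxT n s).subtype := by
  ext p
  constructor
  · rintro ⟨hdeg, hp⟩
    exact ⟨⟨p, (mem_restrictTotalDegree _ _ _).mpr hdeg⟩, mem_ker_momBil_iff.mpr hp, rfl⟩
  · rintro ⟨p, hp, rfl⟩
    exact ⟨(mem_restrictTotalDegree _ _ _).mp p.2, mem_ker_momBil_iff.mp hp⟩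

end MomentForm

section GenericFunctional

variable {n m t : ℕ} {h : Fin m → MP n} {L L' : Module.Dual ℝ (MP n)}

theorem add_mem_Kpos (hL : L ∈ Kpos h t) (hL' : L' ∈ Kpos h t) : L + L' ∈ Kpos h t where
  left g hg := by rw [LinearMap.add_apply, hL.1 g hg, hL'.1 g hg, add_zero]
  right := hL.2.add hL'.2

theorem Generic.ker_momBil_le (hL : Generic h t L) (hL' : L' ∈ Kpos h t) :
    LinearMap.ker (momBil L (t / 2)) ≤ LinearMap.ker (momBil L' (t / 2)) := by
  have hrank : momRank (L + L') (t / 2) ≤ momRank L (t / 2) := hL.2 _ (add_mem_Kpos hL.1 hL')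
  rw [momRank, momRank, momBil_add] at hrank
  exact ker_le_ker_of_finrank_range_add_le hL.1.2.isPosSemidef_momBil hL'.2.isPosSemidef_momBil
    hrank

theorem Generic.momKer_subset (hL : Generic h t L) (hL' : L' ∈ Kpos h t) :
    momKer L (t / 2) ⊆ momKer L' (t / 2) := by
  rw [momKer_eq_map_ker_momBil, momKer_eq_map_ker_momBil]
  exact Submodule.map_mono (hL.ker_momBil_le hL')

end GenericFunctional

/-- Any two generic elements of `K_{t,⪰}` have the same moment-matrix kernel. -/
theorem momKer_eq_of_generic {n m t : ℕ} (h : Fin m → MP n)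
    (L₁ L₂ : Module.Dual ℝ (MP n)) (h₁ : Generic h t L₁) (h₂ : Generic h t L₂) :
    momKer L₁ (t / 2) = momKer L₂ (t / 2) :=
  (h₁.momKer_subset h₂.1).antisymm (h₂.momKer_subset h₁.1)
end

section
/- Let I = (h₁,…,h_m) be an ideal in ℝ[x], let 1 ≤ s ≤ t, and let G ⊆ ℝ[x]_t be a set of polynomials with h₁,…,h_m ∈ G and G ⊆ I. If every linear functional on ℝ[x]_t vanishing on G restricts to the zero functional on ℝ[x]_s (i.e. dim π_s(G^⊥) = 0), then the complex variety V_ℂ(I) is empty. -/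
open MvPolynomial

theorem mem_span_of_forall_dual {k V : Type*} [Field k] [AddCommGroup V] [Module k V]
    {G : Set V} {x : V} (hx : ∀ L : Module.Dual k V, (∀ g ∈ G, L g = 0) → L x = 0) :
    x ∈ Submodule.span k G :=
  (Subspace.forall_mem_dualAnnihilator_apply_eq_zero_iff _ x).mp fun L hL =>
    hx L fun g hg => (Submodule.mem_dualAnnihilator L).mp hL g (Submodule.subset_span hg)

theorem ideal_eq_top_of_forall_dual_one {k A : Type*} [Field k] [Ring A] [Algebra k A]
    {I : Ideal A} {G : Set A} (hGI : G ⊆ I)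
    (hone : ∀ L : Module.Dual k A, (∀ g ∈ G, L g = 0) → L 1 = 0) : I = ⊤ := by
  have span_le : Submodule.span k G ≤ I.restrictScalars k := Submodule.span_le.mpr hGI
  exact I.eq_top_iff_one.mpr (span_le (mem_span_of_forall_dual hone))

theorem complexVariety_empty_of_dimProj_zero_general {σ k K : Type*} [Field k] [Field K]
    [Algebra k K] {I : Ideal (MvPolynomial σ k)} {G : Set (MvPolynomial σ k)} (hGI : G ⊆ I)
    (hone : ∀ L : Module.Dual k (MvPolynomial σ k), (∀ g ∈ G, L g = 0) → L 1 = 0) :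
    zeroLocus K I = ∅ := by
  rw [ideal_eq_top_of_forall_dual_one hGI hone, zeroLocus_top, Set.bot_eq_empty]

/-- If `G ⊆ ℝ[x]_t` contains the generators `h₁,…,h_m` of `I`, `G ⊆ I`, and
every linear functional vanishing on `G` restricts to zero on `ℝ[x]_s` (`dim π_s(G^⊥) = 0`),
then the complex variety `V_ℂ(I)` is empty. -/
theorem complexVariety_empty_of_dimProj_zero {n m s t : ℕ} (h : Fin m → MP n)
    (hs1 : 1 ≤ s) (hst : s ≤ t) (G : Set (MP n)) (hGdeg : ∀ g ∈ G, g.totalDegree ≤ t)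
    (hhG : ∀ j, h j ∈ G) (hGI : G ⊆ (Ideal.span (Set.range h) : Set (MP n)))
    (hzero : ∀ L : Module.Dual ℝ (MP n), (∀ g ∈ G, L g = 0) →
      ∀ p : MP n, p.totalDegree ≤ s → L p = 0) :
    {v : Fin n → ℂ | ∀ j, aeval v (h j) = 0} = ∅ := by
  simpa only [zeroLocus_span, Set.forall_mem_range] using
    complexVariety_empty_of_dimProj_zero_general (K := ℂ) hGI
      fun L hL => hzero L hL 1 (totalDegree_one.trans_le s.zero_le)
end

section
/- Let I = (h₁,…,h_m) be an ideal in ℝ[x], let 1 ≤ s ≤ t, and let G ⊆ ℝ[x]_t be a set of polynomials with h₁,…,h_m ∈ G and G ⊆ √[ℝ]I. If every linear functional on ℝ[x]_t vanishing on G restricts to the zero functional on ℝ[x]_s (i.e. dim π_s(G^⊥) = 0), then the real variety V_ℝ(I) is empty. -/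
open MvPolynomial

/-!
A point `v` of `V_ℝ(I)` gives the evaluation functional at `v`. It vanishes on `I`, hence on
`√[ℝ]I`, because a sum of squares of real numbers is zero only if each square is. So it vanishes
on `G`, but it sends the constant `1`, which lies in every `ℝ[x]_s`, to `1 ≠ 0`.
-/

section RealRadical

variable {A R : Type*} [CommRing A] [CommRing R] [LinearOrder R] [IsStrictOrderedRing R]

/-- The real radical of an ideal of an arbitrary commutative ring, with the same encoding as
`realRad`; it is used to work over any linearly ordered ring and in any number of variables. -/
def realRadical (I : Ideal A) : Set A :=
  {p | ∃ m : ℕ, 0 < m ∧ ∃ (k : ℕ) (q : Fin k → A), p ^ (2 * m) + ∑ j, q j ^ 2 ∈ I}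

theorem realRad_eq_realRadical {n : ℕ} (I : Ideal (MP n)) : realRad I = realRadical I := rfl

theorem eq_zero_of_pow_add_sum_sq_eq_zero {ι : Type*} [Fintype ι] {a : R} {b : ι → R} {m : ℕ}
    (h : a ^ (2 * m) + ∑ j, b j ^ 2 = 0) : a = 0 := by
  have hpow : 0 ≤ a ^ (2 * m) := (even_two_mul m).pow_nonneg a
  have hsum : 0 ≤ ∑ j, b j ^ 2 := Finset.sum_nonneg fun j _ => sq_nonneg (b j)
  exact eq_zero_of_pow_eq_zero ((add_eq_zero_iff_of_nonneg hpow hsum).1 h).1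

theorem realRadical_subset_ker (φ : A →+* R) {I : Ideal A} (hI : I ≤ RingHom.ker φ) :
    realRadical I ⊆ RingHom.ker φ := by
  rintro p ⟨m, -, k, q, hmem⟩
  have hsum : φ p ^ (2 * m) + ∑ j, φ (q j) ^ 2 = 0 := by
    simpa only [RingHom.mem_ker, map_add, map_pow, map_sum] using hI hmem
  exact eq_zero_of_pow_add_sum_sq_eq_zero hsum

theorem not_le_ker_of_forall_dual_one_eq_zero [Algebra R A] {I : Ideal A} {G : Set A}
    (hGI : G ⊆ realRadical I)
    (hone : ∀ L : Module.Dual R A, (∀ g ∈ G, L g = 0) → L 1 = 0) (φ : A →ₐ[R] R) :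
    ¬ I ≤ RingHom.ker φ := by
  intro hI
  have hφG : ∀ g ∈ G, φ.toLinearMap g = 0 := fun g hg =>
    realRadical_subset_ker (φ : A →+* R) hI (hGI hg)
  exact one_ne_zero ((map_one φ).symm.trans (hone φ.toLinearMap hφG))

theorem realVariety_empty_of_dimProj_zero_general {σ ι : Type*} (h : ι → MvPolynomial σ R)
    (G : Set (MvPolynomial σ R)) (hGI : G ⊆ realRadical (Ideal.span (Set.range h)))
    (hone : ∀ L : Module.Dual R (MvPolynomial σ R), (∀ g ∈ G, L g = 0) → L 1 = 0) :
    {v : σ → R | ∀ j, eval v (h j) = 0} = ∅ := by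
  refine Set.eq_empty_of_forall_notMem fun v hv => ?_
  refine not_le_ker_of_forall_dual_one_eq_zero hGI hone (aeval v) (Ideal.span_le.2 ?_)
  rintro _ ⟨j, rfl⟩
  exact hv j

end RealRadical

/-- If `G ⊆ ℝ[x]_t` contains the generators `h₁,…,h_m` of `I`, `G ⊆ √[ℝ]I`,
and every linear functional vanishing on `G` restricts to zero on `ℝ[x]_s`
(`dim π_s(G^⊥) = 0`), then the real variety `V_ℝ(I)` is empty. -/
theorem realVariety_empty_of_dimProj_zero {n m s t : ℕ} (h : Fin m → MP n)
    (hs1 : 1 ≤ s) (hst : s ≤ t) (G : Set (MP n)) (hGdeg : ∀ g ∈ G, g.totalDegree ≤ t)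
    (hhG : ∀ j, h j ∈ G) (hGI : G ⊆ realRad (Ideal.span (Set.range h)))
    (hzero : ∀ L : Module.Dual ℝ (MP n), (∀ g ∈ G, L g = 0) →
      ∀ p : MP n, p.totalDegree ≤ s → L p = 0) :
    {v : Fin n → ℝ | ∀ j, eval v (h j) = 0} = ∅ :=
  realVariety_empty_of_dimProj_zero_general h G (realRad_eq_realRadical _ ▸ hGI) fun L hL =>
    hzero L hL 1 (totalDegree_one.trans_le s.zero_le)
end

section
/- Let I = (h₁,…,h_m) be an ideal in ℝ[x] with D = max_j deg(h_j), let D ≤ s ≤ t, and let G ⊆ ℝ[x]_t with h₁,…,h_m ∈ G and G ⊆ √[ℝ]I. Assume dim π_s(G^⊥) = dim π_{s−1}(G^⊥) and dim π_s(G^⊥) = dim π_s((G^+)^⊥). Then there exists a set B of monomials of degree at most s−1, closed under taking divisions, such that ℝ[x]_s = Span_ℝ(B) ⊕ (ℝ[x]_s ∩ Span_ℝ(G)) is a direct sum decomposition of vector spaces. -/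
open MvPolynomial

/-!
Fix a degree-compatible monomial order and put `N = ℝ[x]_s ∩ Span G`. As in Macaulay's theorem, the
monomials of degree at most `s` that are not leading monomials of elements of `N` span a complement
of `N` in `ℝ[x]_s`. Since `dim π_R(U^⊥) = dim R - dim (R ∩ U)`, the two dimension conditions are
equivalent to `ℝ[x]_s = ℝ[x]_{s-1} + N` and `ℝ[x]_s ∩ Span G⁺ = N`. The first makes every monomial
of degree `s` a leading monomial of `N`; the second makes `N` stable under those multiplications
by variables that stay in degree at most `s`, so that multiples of leading monomials of `N` are
again leading monomials, and the complement is closed under division.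
-/

open Module (finrank)

section Duality

variable {K E : Type*} [Field K] [AddCommGroup E] [Module K E]

/-- The space `π_R(U^⊥)` of restrictions to `R` of the linear functionals vanishing on `U`. -/
def annihilatorRestriction (R U : Submodule K E) : Submodule K (Module.Dual K R) :=
  U.dualAnnihilator.map R.subtype.dualMap

theorem annihilatorRestriction_eq_dualAnnihilator_comap (R U : Submodule K E) :
    annihilatorRestriction R U = (U.comap R.subtype).dualAnnihilator := by
  rw [annihilatorRestriction, ← U.range_dualMap_mkQ_eq, ← LinearMap.range_comp,
    LinearMap.dualMap_comp_dualMap, LinearMap.range_dualMap_eq_dualAnnihilator_ker,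
    LinearMap.ker_comp, Submodule.ker_mkQ]

theorem finrank_inf_add_finrank_annihilatorRestriction (R U : Submodule K E)
    [FiniteDimensional K R] :
    finrank K ↥(R ⊓ U) + finrank K (annihilatorRestriction R U) = finrank K R := by
  rw [annihilatorRestriction_eq_dualAnnihilator_comap, ← Submodule.map_comap_subtype,
    Submodule.finrank_map_subtype_eq]
  exact Subspace.finrank_add_finrank_dualAnnihilator_eq _

theorem inf_eq_inf_of_finrank_annihilatorRestriction_eq {R U W : Submodule K E}
    [FiniteDimensional K R] (hUW : U ≤ W)
    (h : finrank K (annihilatorRestriction R U) = finrank K (annihilatorRestriction R W)) :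
    R ⊓ U = R ⊓ W := by
  have hU := finrank_inf_add_finrank_annihilatorRestriction R U
  have hW := finrank_inf_add_finrank_annihilatorRestriction R W
  exact Submodule.eq_of_le_of_finrank_eq (inf_le_inf_left R hUW) (by lia)

theorem sup_inf_eq_of_finrank_annihilatorRestriction_eq {R R' U : Submodule K E}
    [FiniteDimensional K R] (hR : R' ≤ R)
    (h : finrank K (annihilatorRestriction R U) = finrank K (annihilatorRestriction R' U)) :
    R' ⊔ R ⊓ U = R := by
  have : FiniteDimensional K R' := Submodule.finiteDimensional_of_le hR
  have hRU := finrank_inf_add_finrank_annihilatorRestriction R U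
  have hRU' := finrank_inf_add_finrank_annihilatorRestriction R' U
  have hsup := Submodule.finrank_sup_add_finrank_inf_eq R' (R ⊓ U)
  rw [← inf_assoc, inf_eq_left.2 hR] at hsup
  exact Submodule.eq_of_le_of_finrank_eq (sup_le hR inf_le_left) (by lia)

end Duality

open scoped MonomialOrder

section LeadingExponents

variable {σ R : Type*} [CommSemiring R] (m : MonomialOrder σ)

/-- The exponents of the leading monomials of the nonzero elements of `N`. -/
def leadingExponents (N : Submodule R (MvPolynomial σ R)) : Set (σ →₀ ℕ) :=
  {a | ∃ p ∈ N, p ≠ 0 ∧ m.degree p = a}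

theorem disjoint_restrictSupport_of_disjoint_leadingExponents
    {N : Submodule R (MvPolynomial σ R)} {B : Set (σ →₀ ℕ)}
    (hB : Disjoint B (leadingExponents m N)) : Disjoint (restrictSupport R B) N := by
  rw [Submodule.disjoint_def]
  intro p hpB hpN
  by_contra hp
  exact hB.notMem_of_mem_left (hpB (m.degree_mem_support hp)) ⟨p, hpN, hp, rfl⟩

theorem restrictSupport_le_iff {S : Set (σ →₀ ℕ)} {W : Submodule R (MvPolynomial σ R)} :
    restrictSupport R S ≤ W ↔ ∀ a ∈ S, monomial a 1 ∈ W := by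
  rw [restrictSupport_eq_span, Submodule.span_le, Set.image_subset_iff]
  rfl

theorem sub_leadingTerm_mem_restrictSupport {R : Type*} [CommRing R] {S : Set (σ →₀ ℕ)}
    {p : MvPolynomial σ R} (hp : p ∈ restrictSupport R S) :
    p - m.leadingTerm p ∈ restrictSupport R {b ∈ S | b ≺[m] m.degree p} := by
  classical
  intro b hb
  have hcoeff : coeff b p - coeff b (m.leadingTerm p) ≠ 0 := by
    rwa [← coeff_sub, ← mem_support_iff]
  rw [MonomialOrder.leadingTerm, coeff_monomial] at hcoeff
  have hb_ne : m.degree p ≠ b := by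
    rintro rfl
    exact hcoeff (by rw [if_pos rfl, MonomialOrder.leadingCoeff, sub_self])
  rw [if_neg hb_ne, sub_zero, ← mem_support_iff] at hcoeff
  exact ⟨hp hcoeff, (m.le_degree hcoeff).lt_of_ne fun h => hb_ne (m.toSyn.injective h).symm⟩

theorem restrictSupport_sdiff_leadingExponents_sup {K : Type*} [Field K]
    {N : Submodule K (MvPolynomial σ K)} {S : Set (σ →₀ ℕ)} (hN : N ≤ restrictSupport K S) :
    restrictSupport K (S \ leadingExponents m N) ⊔ N = restrictSupport K S := by
  refine le_antisymm (sup_le (restrictSupport_mono K Set.sdiff_subset) hN)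
    (restrictSupport_le_iff.2 fun a => ?_)
  set W := restrictSupport K (S \ leadingExponents m N) ⊔ N
  induction a using (InvImage.wf m.toSyn wellFounded_lt).induction with
  | _ a ih =>
  intro haS
  by_cases ha : a ∈ leadingExponents m N
  · obtain ⟨p, hpN, hp, rfl⟩ := ha
    have htail : p - m.leadingTerm p ∈ W :=
      restrictSupport_le_iff.2 (fun b hb => ih b hb.2 hb.1)
        (sub_leadingTerm_mem_restrictSupport m (hN hpN))
    have hlead : m.leadingTerm p ∈ W :=
      (W.sub_mem_iff_right (Submodule.mem_sup_right hpN)).1 htail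
    have hmonic : monomial (m.degree p) 1 = (m.leadingCoeff p)⁻¹ • m.leadingTerm p := by
      rw [MonomialOrder.leadingTerm, smul_monomial, smul_eq_mul,
        inv_mul_cancel₀ (m.leadingCoeff_ne_zero_iff.2 hp)]
    exact hmonic ▸ W.smul_mem _ hlead
  · exact Submodule.mem_sup_left ((monomial_mem_restrictSupport K).2 (.inl ⟨haS, ha⟩))

end LeadingExponents

section TotalDegree

variable {σ R : Type*}

theorem restrictTotalDegree_mono [CommSemiring R] {r s : ℕ} (hrs : r ≤ s) :
    restrictTotalDegree σ R r ≤ restrictTotalDegree σ R s :=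
  restrictSupport_mono R fun _ ha => le_trans ha hrs

theorem monomial_mul_mem_of_X_mul_mem [CommSemiring R] [NoZeroDivisors R] [Nontrivial R]
    {N : Submodule R (MvPolynomial σ R)} {s : ℕ}
    (hN : ∀ p ∈ N, ∀ i, (X i * p).totalDegree ≤ s → X i * p ∈ N) {p : MvPolynomial σ R}
    (hp : p ∈ N) (c : σ →₀ ℕ) (r : R) (hs : (monomial c r * p).totalDegree ≤ s) :
    monomial c r * p ∈ N := by
  refine induction_on_monomial (motive := fun q => (q * p).totalDegree ≤ s → q * p ∈ N)
    (fun r _ => by rw [C_mul']; exact N.smul_mem r hp) (fun q i ih hs => ?_) c r hs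
  rw [mul_comm q, mul_assoc] at hs ⊢
  by_cases hqp : q * p = 0
  · simp only [hqp, mul_zero, N.zero_mem]
  have hdeg : (q * p).totalDegree ≤ (X i * (q * p)).totalDegree :=
    totalDegree_le_of_dvd_of_isDomain (dvd_mul_left _ _) (mul_ne_zero (X_ne_zero i) hqp)
  exact hN _ (ih (hdeg.trans hs)) i hs

variable [LinearOrder σ] [WellFoundedGT σ]

theorem add_mem_leadingExponents_degLex [CommSemiring R] [NoZeroDivisors R] [Nontrivial R]
    {N : Submodule R (MvPolynomial σ R)} {s : ℕ}
    (hN : ∀ p ∈ N, ∀ i, (X i * p).totalDegree ≤ s → X i * p ∈ N) {a c : σ →₀ ℕ}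
    (ha : a ∈ leadingExponents .degLex N) (hs : (c + a).degree ≤ s) :
    c + a ∈ leadingExponents .degLex N := by
  classical
  obtain ⟨p, hpN, hp, rfl⟩ := ha
  have hc : monomial c (1 : R) ≠ 0 := monomial_eq_zero.not.2 one_ne_zero
  have hdeg : MonomialOrder.degLex.degree (monomial c 1 * p) =
      c + MonomialOrder.degLex.degree p := by
    rw [MonomialOrder.degree_mul hc hp, MonomialOrder.degree_monomial, if_neg one_ne_zero]
  refine ⟨monomial c 1 * p, monomial_mul_mem_of_X_mul_mem hN hpN c 1 ?_, mul_ne_zero hc hp, hdeg⟩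
  rwa [← degree_degLexDegree, hdeg]

theorem degLex_lt_of_degree_lt {a b : σ →₀ ℕ} (hab : a.degree < b.degree) :
    a ≺[.degLex] b :=
  Finsupp.DegLex.lt_iff.2 (.inl hab)

theorem mem_leadingExponents_degLex_of_restrictTotalDegree_sup [CommRing R] [Nontrivial R]
    {N : Submodule R (MvPolynomial σ R)} {r s : ℕ}
    (hN : restrictTotalDegree σ R r ⊔ N = restrictTotalDegree σ R s) {a : σ →₀ ℕ}
    (hra : r < a.degree) (has : a.degree ≤ s) : a ∈ leadingExponents .degLex N := by
  classical
  have ha : (monomial a 1 : MvPolynomial σ R) ∈ restrictTotalDegree σ R r ⊔ N :=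
    hN ▸ (monomial_mem_restrictSupport R).2 (.inl has)
  obtain ⟨q, hq, g, hg, hqg⟩ := Submodule.mem_sup.1 ha
  have hq_lt : MonomialOrder.degLex.degree q ≺[.degLex]
      MonomialOrder.degLex.degree (monomial a (1 : R)) := by
    rw [MonomialOrder.degree_monomial, if_neg one_ne_zero]
    refine degLex_lt_of_degree_lt (lt_of_le_of_lt ?_ hra)
    rwa [degree_degLexDegree, ← mem_restrictTotalDegree]
  have hga : MonomialOrder.degLex.degree g = a := by
    rw [← sub_eq_of_eq_add' hqg.symm, MonomialOrder.degree_sub_of_lt hq_lt,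
      MonomialOrder.degree_monomial, if_neg one_ne_zero]
  refine ⟨g, hg, fun hg0 => ?_, hga⟩
  rw [hg0, MonomialOrder.degree_zero] at hga
  simp [← hga] at hra

end TotalDegree

theorem exists_isLowerSet_complement {σ K : Type*} [Field K] {N : Submodule K (MvPolynomial σ K)}
    {r s : ℕ} (hsup : restrictTotalDegree σ K r ⊔ N = restrictTotalDegree σ K s)
    (hX : ∀ p ∈ N, ∀ i, (X i * p).totalDegree ≤ s → X i * p ∈ N) :
    ∃ B : Set (σ →₀ ℕ), (∀ a ∈ B, a.degree ≤ r) ∧ IsLowerSet B ∧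
      restrictSupport K B ⊓ N = ⊥ ∧ restrictSupport K B ⊔ N = restrictTotalDegree σ K s := by
  obtain ⟨_, _⟩ := exists_wellFoundedGT σ
  have hN : N ≤ restrictTotalDegree σ K s := hsup ▸ le_sup_right
  refine ⟨{a | a.degree ≤ s} \ leadingExponents .degLex N, ?_, ?_, ?_,
    restrictSupport_sdiff_leadingExponents_sup _ hN⟩
  · rintro a ⟨has, ha⟩
    contrapose! ha
    exact mem_leadingExponents_degLex_of_restrictTotalDegree_sup hsup ha has
  · rintro a b hba ⟨has, ha⟩
    refine ⟨(Finsupp.degree_mono hba).trans has, fun hb => ha ?_⟩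
    rw [← tsub_add_cancel_of_le hba] at has ⊢
    exact add_mem_leadingExponents_degLex hX hb has
  · exact (disjoint_restrictSupport_of_disjoint_leadingExponents _ Set.disjoint_sdiff_left).eq_bot

theorem exists_divClosed_complement_general {σ K : Type*} [Finite σ] [Field K] {r s : ℕ}
    (hrs : r ≤ s) (G : Set (MvPolynomial σ K))
    (hproj : finrank K (annihilatorRestriction (restrictTotalDegree σ K s) (.span K G)) =
      finrank K (annihilatorRestriction (restrictTotalDegree σ K r) (.span K G)))
    (hprol : finrank K (annihilatorRestriction (restrictTotalDegree σ K s) (.span K G)) =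
      finrank K (annihilatorRestriction (restrictTotalDegree σ K s)
        (.span K (G ∪ ⋃ i : σ, (fun p => X i * p) '' G)))) :
    ∃ B : Set (σ →₀ ℕ), (∀ a ∈ B, a.degree ≤ r) ∧ IsLowerSet B ∧
      restrictSupport K B ⊓ (restrictTotalDegree σ K s ⊓ Submodule.span K G) = ⊥ ∧
      restrictSupport K B ⊔ (restrictTotalDegree σ K s ⊓ Submodule.span K G) =
        restrictTotalDegree σ K s := by
  refine exists_isLowerSet_complement
    (sup_inf_eq_of_finrank_annihilatorRestriction_eq (restrictTotalDegree_mono hrs) hproj)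
    fun p hp i hdeg => ?_
  have hspan : X i * p ∈ Submodule.span K (G ∪ ⋃ i : σ, (fun p => X i * p) '' G) := by
    have hXp := Submodule.mem_map_of_mem (f := LinearMap.mulLeft K (X i)) hp.2
    rw [Submodule.map_span] at hXp
    exact Submodule.span_mono (Set.subset_union_of_subset_right
      (Set.subset_iUnion (fun i => (fun p => X i * p) '' G) i) G) hXp
  rw [inf_eq_inf_of_finrank_annihilatorRestriction_eq
    (Submodule.span_mono Set.subset_union_left) hprol]
  exact ⟨(mem_restrictTotalDegree _ _ _).2 hdeg, hspan⟩

/-- Under the prolongation-projection dimension conditions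
`dim π_s(G^⊥) = dim π_{s−1}(G^⊥) = dim π_s((G⁺)^⊥)` (with `D ≤ s ≤ t`, `h_j ∈ G ⊆ √[ℝ]I`),
there exists a set `B` of monomials of degree at most `s−1`, closed under taking divisions,
with `ℝ[x]_s = Span_ℝ(B) ⊕ (ℝ[x]_s ∩ Span_ℝ(G))`. -/
theorem exists_divClosed_complement {n m s t : ℕ} (h : Fin m → MP n)
    (hD : ∀ j, (h j).totalDegree ≤ s) (hst : s ≤ t)
    (G : Set (MP n)) (hGdeg : ∀ g ∈ G, g.totalDegree ≤ t)
    (hhG : ∀ j, h j ∈ G) (hGI : G ⊆ realRad (Ideal.span (Set.range h)))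
    (hdim1 : dimProj s G = dimProj (s - 1) G)
    (hdim2 : dimProj s G = dimProj s (plusOp G)) :
    ∃ B : Set (Fin n →₀ ℕ), (∀ a ∈ B, mdeg a ≤ s - 1) ∧ DivClosed B ∧
      spanMon B ⊓ (RxT n s ⊓ Submodule.span ℝ G) = ⊥ ∧
      spanMon B ⊔ (RxT n s ⊓ Submodule.span ℝ G) = RxT n s := by
  obtain ⟨B, hBdeg, hBlower, hB⟩ :=
    exists_divClosed_complement_general (Nat.sub_le s 1) G hdim1 hdim2
  exact ⟨B, hBdeg, fun _ ha _ ha' => hBlower ha' ha, by rwa [restrictSupport_eq_span] at hB⟩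
end
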